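/- Poincaré-type inequality in the mixture space: if f ∈ C¹ with polynomial growth on ℝⁿ and λ > 0 satisfies C(λπ/2)·∫ C(|y|) M(y)dy = 1 with C(a) = max(|a|, a²), then ∫(cosh−1)_*(λ(f(x) − ∫f M)) M(x)dx ≤ ∫(cosh−1)_*(|∇f(x)|) M(x)dx; equivalently ‖f − ∫ f M‖_{(cosh−1)_*,M} ≤ λ^{−1} ‖|∇f|‖_{(cosh−1)_*,M}. -/

import Mathlib

open Real MeasureTheory
open scoped ENNReal

noncomputable section

/-- The standard `n`-dimensional Gaussian density. -/
def gaussM (n : ℕ) (x : EuclideanSpace ℝ (Fin n)) : ℝ :=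
  (2 * π) ^ (-(n : ℝ) / 2) * exp (-‖x‖ ^ 2 / 2)

/-- The standard Gaussian measure `M(x)dx` on `ℝⁿ`. -/
def gaussMeasure (n : ℕ) : Measure (EuclideanSpace ℝ (Fin n)) :=
  volume.withDensity fun x => ENNReal.ofReal (gaussM n x)

/-- The conjugate Young function `(cosh−1)_*`. -/
def conjY (y : ℝ) : ℝ := ∫ t in (0:ℝ)..y, arsinh t

/-- Luxemburg norm for the Young function `Φ` with respect to a measure `μ`. -/
def luxNorm {E : Type*} [MeasurableSpace E] (Φ : ℝ → ℝ) (μ : Measure E)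
    (g : E → ℝ) : ℝ :=
  sInf {ρ : ℝ | 0 < ρ ∧ ∫ x, Φ (g x / ρ) ∂μ ≤ 1 ∧
    Integrable (fun x => Φ (g x / ρ)) μ}

/-!
The Maurey–Pisier rotation argument. For independent copies `X`, `Y` of a centred Gaussian vector,
Jensen's inequality bounds `E Φ(f X - E f)` by `E Φ(f Y - f X)`. The curve `cos θ • X + sin θ • Y`
joins `X` to `Y` as `θ` runs over `[0, π/2]`, its velocity is `-sin θ • X + cos θ • Y`, and by
rotation invariance position and velocity are again independent copies of `X` for every `θ`. Hence
Jensen's inequality in `θ` gives `E Φ(f Y - f X) ≤ E Φ(π/2 * f'(X) Y)`, and the bound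
`Φ(a t) ≤ max(|a|, a²) Φ(t)` separates the variables. Applying this to `Φ(·/ρ)` for all `ρ` gives
the inequality between Luxemburg norms.
-/

section PolynomialGrowth

variable {E F G : Type*} [NormedAddCommGroup E] [NormedAddCommGroup F] [NormedAddCommGroup G]

/-- Polynomial growth of a map between normed groups; no regularity of the map is required, in
contrast with `Function.HasTemperateGrowth`. -/
def HasPolynomialGrowth (g : E → F) : Prop :=
  ∃ (C : ℝ) (k : ℕ), ∀ x, ‖g x‖ ≤ C * (1 + ‖x‖) ^ k

namespace HasPolynomialGrowth

lemma exists_nonneg_bound {g : E → F} (hg : HasPolynomialGrowth g) :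
    ∃ (C : ℝ) (k : ℕ), 0 ≤ C ∧ ∀ x, ‖g x‖ ≤ C * (1 + ‖x‖) ^ k := by
  obtain ⟨C, k, hC⟩ := hg
  refine ⟨C, k, ?_, hC⟩
  simpa using (norm_nonneg (g 0)).trans (hC 0)

lemma const (c : F) : HasPolynomialGrowth fun _ : E ↦ c :=
  ⟨‖c‖, 0, by simp⟩

lemma norm {g : E → F} (hg : HasPolynomialGrowth g) : HasPolynomialGrowth fun x ↦ ‖g x‖ := by
  simpa only [HasPolynomialGrowth, norm_norm] using hg

lemma sub {g h : E → F} (hg : HasPolynomialGrowth g) (hh : HasPolynomialGrowth h) :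
    HasPolynomialGrowth fun x ↦ g x - h x := by
  obtain ⟨C, k, hC0, hC⟩ := hg.exists_nonneg_bound
  obtain ⟨D, m, hD0, hD⟩ := hh.exists_nonneg_bound
  refine ⟨C + D, max k m, fun x ↦ ?_⟩
  have one_le : 1 ≤ 1 + ‖x‖ := le_add_of_nonneg_right (norm_nonneg x)
  calc ‖g x - h x‖ ≤ ‖g x‖ + ‖h x‖ := norm_sub_le _ _
    _ ≤ C * (1 + ‖x‖) ^ k + D * (1 + ‖x‖) ^ m := add_le_add (hC x) (hD x)
    _ ≤ C * (1 + ‖x‖) ^ max k m + D * (1 + ‖x‖) ^ max k m := by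
      gcongr
      exacts [le_max_left k m, le_max_right k m]
    _ = (C + D) * (1 + ‖x‖) ^ max k m := by ring

lemma comp {g : F → G} {h : E → F} (hg : HasPolynomialGrowth g) (hh : HasPolynomialGrowth h) :
    HasPolynomialGrowth fun x ↦ g (h x) := by
  obtain ⟨C, k, hC0, hC⟩ := hg.exists_nonneg_bound
  obtain ⟨D, m, hD⟩ := hh
  refine ⟨C * (1 + D) ^ k, m * k, fun x ↦ ?_⟩
  have one_le : 1 ≤ (1 + ‖x‖) ^ m := one_le_pow₀ (le_add_of_nonneg_right (norm_nonneg x))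
  calc ‖g (h x)‖ ≤ C * (1 + ‖h x‖) ^ k := hC _
    _ ≤ C * ((1 + D) * (1 + ‖x‖) ^ m) ^ k := by
      gcongr
      linarith [hD x]
    _ = C * (1 + D) ^ k * (1 + ‖x‖) ^ (m * k) := by rw [mul_pow, ← pow_mul, mul_assoc]

open ProbabilityTheory in
lemma integrable [NormedSpace ℝ E] [CompleteSpace E] [SecondCountableTopology E]
    [MeasurableSpace E] [BorelSpace E] {μ : Measure E} [IsGaussian μ] {g : E → F}
    (hg : HasPolynomialGrowth g) (hgm : AEStronglyMeasurable g μ) : Integrable g μ := by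
  obtain ⟨C, k, hC⟩ := hg
  have memLp_one_add_norm : MemLp (fun x : E ↦ 1 + ‖x‖) k μ :=
    (memLp_const (1 : ℝ)).add (IsGaussian.memLp_id μ k (ENNReal.natCast_ne_top k)).norm
  have integrable_pow : Integrable (fun x : E ↦ ‖1 + ‖x‖‖ ^ k) μ :=
    memLp_one_add_norm.integrable_norm_pow'
  refine (integrable_pow.const_mul C).mono' hgm (.of_forall fun x ↦ ?_)
  rw [norm_of_nonneg (by positivity : 0 ≤ 1 + ‖x‖)]
  exact hC x

variable [NormedSpace ℝ F] [NormedSpace ℝ G]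

lemma of_continuousLinearMap (L : F →L[ℝ] G) : HasPolynomialGrowth L := by
  refine ⟨‖L‖, 1, fun x ↦ (L.le_opNorm x).trans ?_⟩
  gcongr
  linarith

lemma clm_apply {L : E → F →L[ℝ] G} {v : E → F} (hL : HasPolynomialGrowth L)
    (hv : HasPolynomialGrowth v) : HasPolynomialGrowth fun x ↦ L x (v x) := by
  obtain ⟨C, k, hC0, hC⟩ := hL.exists_nonneg_bound
  obtain ⟨D, m, hD⟩ := hv
  refine ⟨C * D, k + m, fun x ↦ ?_⟩
  calc ‖L x (v x)‖ ≤ ‖L x‖ * ‖v x‖ := (L x).le_opNorm _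
    _ ≤ (C * (1 + ‖x‖) ^ k) * (D * (1 + ‖x‖) ^ m) :=
      mul_le_mul (hC x) (hD x) (norm_nonneg _) (by positivity)
    _ = C * D * (1 + ‖x‖) ^ (k + m) := by ring

lemma const_mul {g : E → ℝ} (hg : HasPolynomialGrowth g) (c : ℝ) :
    HasPolynomialGrowth fun x ↦ c * g x :=
  (of_continuousLinearMap (ContinuousLinearMap.mul ℝ ℝ c)).comp hg

lemma of_fderiv [NormedSpace ℝ E] {f : E → F} (hf : Differentiable ℝ f)
    (hf' : HasPolynomialGrowth (fderiv ℝ f)) : HasPolynomialGrowth f := by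
  obtain ⟨C, k, hC0, hC⟩ := hf'.exists_nonneg_bound
  have increment_growth : HasPolynomialGrowth fun x ↦ f x - f 0 := by
    refine ⟨C, k + 1, fun x ↦ ?_⟩
    have fderiv_le : ∀ y ∈ Metric.closedBall (0 : E) ‖x‖,
        ‖fderiv ℝ f y‖ ≤ C * (1 + ‖x‖) ^ k := fun y hy ↦ by
      have := mem_closedBall_zero_iff.1 hy
      exact (hC y).trans (by gcongr)
    calc ‖f x - f 0‖ ≤ C * (1 + ‖x‖) ^ k * ‖x - 0‖ :=
          (convex_closedBall _ _).norm_image_sub_le_of_norm_fderiv_le (fun y _ ↦ hf y) fderiv_le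
            (by simp) (by simp)
      _ ≤ C * (1 + ‖x‖) ^ k * (1 + ‖x‖) := by gcongr; simp
      _ = C * (1 + ‖x‖) ^ (k + 1) := by ring
  simpa using increment_growth.sub (const (-f 0))

end HasPolynomialGrowth

end PolynomialGrowth

section DeltaTwo

/-- The global Δ₂-condition with the constant `C(a) = max(|a|, a²)`. -/
def HasDeltaTwoBound (Φ : ℝ → ℝ) : Prop :=
  ∀ a t, Φ (a * t) ≤ max |a| (a ^ 2) * Φ t

namespace HasDeltaTwoBound

variable {Φ : ℝ → ℝ}

lemma nonneg (hΦ : HasDeltaTwoBound Φ) (t : ℝ) : 0 ≤ Φ t := by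
  have halve : Φ (1 / 2 * t) ≤ 1 / 2 * Φ t := by
    convert hΦ (1 / 2) t using 2
    norm_num [abs_of_pos]
  have double : Φ t ≤ 4 * Φ (1 / 2 * t) := by
    convert hΦ 2 (1 / 2 * t) using 2
    · ring
    · norm_num
  linarith

lemma le_of_abs_le_abs (hΦ : HasDeltaTwoBound Φ) {s t : ℝ} (hst : |s| ≤ |t|) : Φ s ≤ Φ t := by
  rcases eq_or_ne t 0 with rfl | ht
  · rw [abs_zero, abs_nonpos_iff] at hst
    rw [hst]
  have ratio_le : |s / t| ≤ 1 := by
    rw [abs_div]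
    exact div_le_one_of_le₀ hst (abs_nonneg t)
  calc Φ s = Φ (s / t * t) := by rw [div_mul_cancel₀ s ht]
    _ ≤ max |s / t| ((s / t) ^ 2) * Φ t := hΦ _ _
    _ ≤ 1 * Φ t :=
      mul_le_mul_of_nonneg_right (max_le ratio_le ((sq_le_one_iff_abs_le_one _).2 ratio_le))
        (hΦ.nonneg t)
    _ = Φ t := one_mul _

lemma hasPolynomialGrowth (hΦ : HasDeltaTwoBound Φ) : HasPolynomialGrowth Φ := by
  refine ⟨Φ 1, 2, fun t ↦ ?_⟩
  have max_le_sq : max |t| (t ^ 2) ≤ (1 + |t|) ^ 2 := by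
    rw [← sq_abs t]
    apply max_le <;> nlinarith [abs_nonneg t]
  calc ‖Φ t‖ = Φ (t * 1) := by rw [mul_one, norm_of_nonneg (hΦ.nonneg t)]
    _ ≤ max |t| (t ^ 2) * Φ 1 := hΦ t 1
    _ ≤ (1 + |t|) ^ 2 * Φ 1 := mul_le_mul_of_nonneg_right max_le_sq (hΦ.nonneg 1)
    _ = Φ 1 * (1 + ‖t‖) ^ 2 := mul_comm _ _

lemma comp_div_const (hΦ : HasDeltaTwoBound Φ) (ρ : ℝ) : HasDeltaTwoBound fun t ↦ Φ (t / ρ) :=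
  fun a t ↦ by simpa only [mul_div_assoc] using hΦ a (t / ρ)

lemma apply_mul_clm_le {E : Type*} [NormedAddCommGroup E] [NormedSpace ℝ E]
    (hΦ : HasDeltaTwoBound Φ) (a : ℝ) (L : E →L[ℝ] ℝ) (y : E) :
    Φ (a * L y) ≤ max |a| (a ^ 2) * (Φ ‖L‖ * max ‖y‖ (‖y‖ ^ 2)) := by
  have abs_apply_le : |L y| ≤ |‖y‖ * ‖L‖| :=
    (L.le_opNorm y).trans ((mul_comm _ _).trans_le (le_abs_self _))
  calc Φ (a * L y) ≤ max |a| (a ^ 2) * Φ (L y) := hΦ _ _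
    _ ≤ max |a| (a ^ 2) * Φ (‖y‖ * ‖L‖) := by gcongr; exact hΦ.le_of_abs_le_abs abs_apply_le
    _ ≤ max |a| (a ^ 2) * (max |‖y‖| (‖y‖ ^ 2) * Φ ‖L‖) := by gcongr; exact hΦ _ _
    _ = max |a| (a ^ 2) * (Φ ‖L‖ * max ‖y‖ (‖y‖ ^ 2)) := by
      rw [abs_norm, mul_comm (Φ ‖L‖)]

lemma integral_apply_mul_clm_prod_le {α E : Type*} [MeasurableSpace α] [NormedAddCommGroup E]
    [NormedSpace ℝ E] [MeasurableSpace E] {μ : Measure α} {ν : Measure E} [SFinite μ] [SFinite ν]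
    (hΦ : HasDeltaTwoBound Φ) (a : ℝ) {L : α → E →L[ℝ] ℝ}
    (hL : Integrable (fun x ↦ Φ ‖L x‖) μ) (hν : Integrable (fun y ↦ max ‖y‖ (‖y‖ ^ 2)) ν) :
    ∫ q, Φ (a * L q.1 q.2) ∂(μ.prod ν) ≤
      max |a| (a ^ 2) * (∫ y, max ‖y‖ (‖y‖ ^ 2) ∂ν) * ∫ x, Φ ‖L x‖ ∂μ :=
  calc ∫ q, Φ (a * L q.1 q.2) ∂(μ.prod ν)
      ≤ ∫ q, max |a| (a ^ 2) * (Φ ‖L q.1‖ * max ‖q.2‖ (‖q.2‖ ^ 2)) ∂(μ.prod ν) :=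
        integral_mono_of_nonneg (.of_forall fun _ ↦ hΦ.nonneg _) ((hL.mul_prod hν).const_mul _)
          (.of_forall fun q ↦ hΦ.apply_mul_clm_le a (L q.1) q.2)
    _ = max |a| (a ^ 2) * (∫ y, max ‖y‖ (‖y‖ ^ 2) ∂ν) * ∫ x, Φ ‖L x‖ ∂μ := by
        rw [integral_const_mul,
          integral_prod_mul (fun x ↦ Φ ‖L x‖) (fun y ↦ max ‖y‖ (‖y‖ ^ 2))]
        ring

end HasDeltaTwoBound

end DeltaTwo

section LuxemburgNorm

variable {α : Type*} [MeasurableSpace α] {μ : Measure α} {Φ : ℝ → ℝ} {g h : α → ℝ}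

open scoped Pointwise in
lemma luxNorm_const_mul {c : ℝ} (hc : 0 < c) :
    luxNorm Φ μ (fun x ↦ c * g x) = c * luxNorm Φ μ g := by
  have inv_smul_pos_iff (ρ : ℝ) : 0 < c⁻¹ • ρ ↔ 0 < ρ := by
    rw [smul_eq_mul, mul_pos_iff_of_pos_left (inv_pos.2 hc)]
  have rescale (x : α) (ρ : ℝ) : c * g x / ρ = g x / c⁻¹ • ρ := by
    rw [smul_eq_mul, div_mul_eq_div_div, div_inv_eq_mul, mul_comm]
  rw [luxNorm, luxNorm, ← smul_eq_mul, ← Real.sInf_smul_of_nonneg hc.le]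
  congr 1
  ext ρ
  simp only [Set.mem_smul_set_iff_inv_smul_mem₀ hc.ne', Set.mem_ofPred_eq, inv_smul_pos_iff,
    rescale]

lemma luxNorm_le_luxNorm
    (hgh : ∀ ρ > 0, ∫ x, Φ (g x / ρ) ∂μ ≤ ∫ x, Φ (h x / ρ) ∂μ)
    (hg : ∀ ρ > 0, Integrable (fun x ↦ Φ (g x / ρ)) μ)
    (hh : {ρ : ℝ | 0 < ρ ∧ ∫ x, Φ (h x / ρ) ∂μ ≤ 1 ∧
      Integrable (fun x ↦ Φ (h x / ρ)) μ}.Nonempty) :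
    luxNorm Φ μ g ≤ luxNorm Φ μ h :=
  csInf_le_csInf ⟨0, fun _ hρ ↦ hρ.1.le⟩ hh fun ρ hρ ↦
    ⟨hρ.1, (hgh ρ hρ.1).trans hρ.2.1, hg ρ hρ.1⟩

lemma HasDeltaTwoBound.nonempty_setOf_modular_le_one (hΦ : HasDeltaTwoBound Φ)
    (hg : ∀ ρ > 0, Integrable (fun x ↦ Φ (g x / ρ)) μ) :
    {ρ : ℝ | 0 < ρ ∧ ∫ x, Φ (g x / ρ) ∂μ ≤ 1 ∧
      Integrable (fun x ↦ Φ (g x / ρ)) μ}.Nonempty := by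
  set I := ∫ x, Φ (g x) ∂μ
  have I_nonneg : 0 ≤ I := integral_nonneg fun x ↦ hΦ.nonneg _
  have I_add_one_pos : 0 < I + 1 := by positivity
  have modular_pointwise (x : α) : Φ (g x / (I + 1)) ≤ (I + 1)⁻¹ * Φ (g x) := by
    have inv_I_nonneg : 0 ≤ (I + 1)⁻¹ := by positivity
    have inv_I_le_one : (I + 1)⁻¹ ≤ 1 := inv_le_one_of_one_le₀ (by linarith)
    have max_eq : max |(I + 1)⁻¹| ((I + 1)⁻¹ ^ 2) = (I + 1)⁻¹ := by
      rw [abs_of_nonneg inv_I_nonneg]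
      exact max_eq_left (pow_le_of_le_one inv_I_nonneg inv_I_le_one two_ne_zero)
    simpa only [div_eq_inv_mul, max_eq] using hΦ (I + 1)⁻¹ (g x)
  refine ⟨I + 1, I_add_one_pos, ?_, hg _ I_add_one_pos⟩
  calc ∫ x, Φ (g x / (I + 1)) ∂μ ≤ ∫ x, (I + 1)⁻¹ * Φ (g x) ∂μ :=
        integral_mono (hg _ I_add_one_pos) ((by simpa using hg 1 one_pos :
          Integrable (fun x ↦ Φ (g x)) μ).const_mul _) modular_pointwise
    _ = (I + 1)⁻¹ * I := integral_const_mul _ _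
    _ ≤ 1 := by rw [inv_mul_le_iff₀ I_add_one_pos]; linarith

end LuxemburgNorm

section MaureyPisier

open ProbabilityTheory ContinuousLinearMap

lemma integral_comp_sub_integral_le_integral_prod {α : Type*} [MeasurableSpace α] {μ : Measure α}
    [IsProbabilityMeasure μ] {Φ : ℝ → ℝ} {f : α → ℝ} (hΦ : ConvexOn ℝ Set.univ Φ)
    (hf : Integrable f μ) (hΦf : Integrable (fun x ↦ Φ (f x - ∫ y, f y ∂μ)) μ)
    (hΦff : Integrable (fun p : α × α ↦ Φ (f p.2 - f p.1)) (μ.prod μ)) :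
    ∫ x, Φ (f x - ∫ y, f y ∂μ) ∂μ ≤ ∫ p, Φ (f p.2 - f p.1) ∂(μ.prod μ) := by
  rw [integral_prod_symm _ hΦff]
  refine integral_mono_ae hΦf hΦff.integral_prod_right ?_
  filter_upwards [hΦff.prod_left_ae] with x hx
  have average_sub : ∫ y, (f x - f y) ∂μ = f x - ∫ y, f y ∂μ := by
    rw [integral_sub (integrable_const _) hf, integral_const, probReal_univ, one_smul]
  rw [← average_sub]
  exact hΦ.map_integral_le hΦ.locallyLipschitz.continuous.continuousOn isClosed_univ (by simp)
    ((integrable_const _).sub hf) hx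

/-- The uniform distribution of the rotation angle on a quarter turn `(0, π/2]`. -/
def uniformQuarterTurn : Measure ℝ := volume[|Set.Ioc 0 (π / 2)]

instance : IsProbabilityMeasure uniformQuarterTurn :=
  cond_isProbabilityMeasure_of_finite (by simp [pi_pos]) (by simp)

lemma integral_uniformQuarterTurn (g : ℝ → ℝ) :
    ∫ θ, g θ ∂uniformQuarterTurn = (π / 2)⁻¹ * ∫ θ in 0..π / 2, g θ := by
  rw [intervalIntegral.integral_of_le pi_div_two_pos.le, uniformQuarterTurn,
    ProbabilityTheory.cond, integral_smul_measure]
  simp [pi_div_two_pos.le]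

lemma integrable_uniformQuarterTurn {g : ℝ → ℝ} (hg : Continuous g) :
    Integrable g uniformQuarterTurn :=
  hg.integrableOn_Ioc.smul_measure (by simp [pi_pos])

variable {E : Type*} [NormedAddCommGroup E] [NormedSpace ℝ E]

lemma hasDerivAt_fst_rotation (p : E × E) (θ : ℝ) :
    HasDerivAt (fun θ ↦ (rotation θ p).1) (rotation θ p).2 θ :=
  ((hasDerivAt_cos θ).smul_const p.1).add ((hasDerivAt_sin θ).smul_const p.2)

lemma continuous_rotation : Continuous fun q : ℝ × (E × E) ↦ rotation q.1 q.2 := by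
  simp only [ContinuousLinearMap.rotation_apply]
  fun_prop

lemma continuous_fderiv_rotation {f : E → ℝ} (hf : ContDiff ℝ 1 f) (p : E × E) :
    Continuous fun θ ↦ fderiv ℝ f (rotation θ p).1 (rotation θ p).2 := by
  have continuous_angle : Continuous fun θ : ℝ ↦ rotation θ p := by
    simp only [ContinuousLinearMap.rotation_apply]
    fun_prop
  exact ((hf.continuous_fderiv one_ne_zero).comp continuous_angle.fst).clm_apply
    continuous_angle.snd

lemma integral_fderiv_rotation {f : E → ℝ} (hf : ContDiff ℝ 1 f) (p : E × E) :
    ∫ θ in 0..π / 2, fderiv ℝ f (rotation θ p).1 (rotation θ p).2 = f p.2 - f p.1 := by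
  rw [intervalIntegral.integral_eq_sub_of_hasDerivAt
    (fun θ _ ↦ (hf.differentiable one_ne_zero _).hasFDerivAt.comp_hasDerivAt θ
      (hasDerivAt_fst_rotation p θ))
    ((continuous_fderiv_rotation hf p).intervalIntegrable _ _)]
  simp [ContinuousLinearMap.rotation_apply]

lemma apply_sub_le_integral_rotation {Φ : ℝ → ℝ} (hΦ : ConvexOn ℝ Set.univ Φ) {f : E → ℝ}
    (hf : ContDiff ℝ 1 f) (p : E × E) :
    Φ (f p.2 - f p.1) ≤
      ∫ θ, Φ (π / 2 * fderiv ℝ f (rotation θ p).1 (rotation θ p).2) ∂uniformQuarterTurn := by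
  have continuous_speed := (continuous_fderiv_rotation hf p).const_mul (π / 2)
  have average_speed : ∫ θ, π / 2 * fderiv ℝ f (rotation θ p).1 (rotation θ p).2
      ∂uniformQuarterTurn = f p.2 - f p.1 := by
    rw [integral_uniformQuarterTurn, intervalIntegral.integral_const_mul,
      integral_fderiv_rotation hf, inv_mul_cancel_left₀ pi_div_two_pos.ne']
  rw [← average_speed]
  have hΦc := hΦ.locallyLipschitz.continuous
  exact hΦ.map_integral_le hΦc.continuousOn isClosed_univ (by simp)
    (integrable_uniformQuarterTurn continuous_speed)
    (integrable_uniformQuarterTurn (hΦc.comp continuous_speed))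

variable [CompleteSpace E] [SecondCountableTopology E] [MeasurableSpace E] [BorelSpace E]
  {μ : Measure E} [IsGaussian μ]

lemma measurePreserving_rotation (hμ : ∫ x, x ∂μ = 0) (ν : Measure ℝ) [SFinite ν] :
    MeasurePreserving (fun q : ℝ × (E × E) ↦ (q.1, rotation q.1 q.2))
      (ν.prod (μ.prod μ)) (ν.prod (μ.prod μ)) :=
  (MeasurePreserving.id ν).skew_product continuous_rotation.measurable
    (.of_forall fun θ ↦ IsGaussian.map_rotation_eq_self hμ θ)

lemma integrable_comp_rotation (hμ : ∫ x, x ∂μ = 0) (ν : Measure ℝ) [IsFiniteMeasure ν]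
    {K : E × E → ℝ} (hK : Integrable K (μ.prod μ)) :
    Integrable (fun q : ℝ × (E × E) ↦ K (rotation q.1 q.2)) (ν.prod (μ.prod μ)) :=
  (measurePreserving_rotation hμ ν).integrable_comp_of_integrable (hK.comp_snd ν)

lemma integral_integral_comp_rotation (hμ : ∫ x, x ∂μ = 0) (ν : Measure ℝ)
    [IsProbabilityMeasure ν] {K : E × E → ℝ} (hK : Integrable K (μ.prod μ)) :
    ∫ p, ∫ θ, K (rotation θ p) ∂ν ∂(μ.prod μ) = ∫ q, K q ∂(μ.prod μ) := by
  have integral_fixed_angle (θ : ℝ) :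
      ∫ p, K (rotation θ p) ∂(μ.prod μ) = ∫ q, K q ∂(μ.prod μ) := by
    have map_eq : (μ.prod μ).map (rotation θ) = μ.prod μ := IsGaussian.map_rotation_eq_self hμ θ
    rw [← integral_map (by fun_prop) (by rw [map_eq]; exact hK.1), map_eq]
  rw [← integral_integral_swap (f := fun θ p ↦ K (rotation θ p)) (integrable_comp_rotation hμ ν hK)]
  simp [integral_fixed_angle]

theorem integral_comp_sub_integral_le_integral_fderiv (hμ : ∫ x, x ∂μ = 0) {Φ : ℝ → ℝ}
    (hΦ : ConvexOn ℝ Set.univ Φ) (hΦ_growth : HasPolynomialGrowth Φ) {f : E → ℝ}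
    (hf : ContDiff ℝ 1 f) (hf' : HasPolynomialGrowth (fderiv ℝ f)) :
    ∫ x, Φ (f x - ∫ y, f y ∂μ) ∂μ ≤
      ∫ q, Φ (π / 2 * fderiv ℝ f q.1 q.2) ∂(μ.prod μ) := by
  have hΦc : Continuous Φ := hΦ.locallyLipschitz.continuous
  have hfc : Continuous f := hf.continuous
  have f_growth : HasPolynomialGrowth f := .of_fderiv (hf.differentiable one_ne_zero) hf'
  have fst_growth : HasPolynomialGrowth (Prod.fst : E × E → E) :=
    .of_continuousLinearMap (fst ℝ E E)
  have snd_growth : HasPolynomialGrowth (Prod.snd : E × E → E) :=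
    .of_continuousLinearMap (snd ℝ E E)
  have integrable_centered : Integrable (fun x ↦ Φ (f x - ∫ y, f y ∂μ)) μ :=
    (hΦ_growth.comp (f_growth.sub (.const _))).integrable (by fun_prop)
  have integrable_increment : Integrable (fun p : E × E ↦ Φ (f p.2 - f p.1)) (μ.prod μ) :=
    (hΦ_growth.comp ((f_growth.comp snd_growth).sub (f_growth.comp fst_growth))).integrable
      (by fun_prop)
  have integrable_fderiv :
      Integrable (fun q : E × E ↦ Φ (π / 2 * fderiv ℝ f q.1 q.2)) (μ.prod μ) :=
    (hΦ_growth.comp (((hf'.comp fst_growth).clm_apply snd_growth).const_mul _)).integrable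
      (by fun_prop)
  calc ∫ x, Φ (f x - ∫ y, f y ∂μ) ∂μ ≤ ∫ p, Φ (f p.2 - f p.1) ∂(μ.prod μ) :=
        integral_comp_sub_integral_le_integral_prod hΦ (f_growth.integrable (by fun_prop))
          integrable_centered integrable_increment
    _ ≤ ∫ p, ∫ θ, Φ (π / 2 * fderiv ℝ f (rotation θ p).1 (rotation θ p).2)
          ∂uniformQuarterTurn ∂(μ.prod μ) :=
        integral_mono integrable_increment
          (integrable_comp_rotation hμ _ integrable_fderiv).integral_prod_right
          (apply_sub_le_integral_rotation hΦ hf)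
    _ = ∫ q, Φ (π / 2 * fderiv ℝ f q.1 q.2) ∂(μ.prod μ) :=
        integral_integral_comp_rotation hμ _ integrable_fderiv

theorem HasDeltaTwoBound.integral_mul_sub_integral_le (hμ : ∫ x, x ∂μ = 0) {Φ : ℝ → ℝ}
    (hΦ : HasDeltaTwoBound Φ) (hΦ_convex : ConvexOn ℝ Set.univ Φ) {f : E → ℝ}
    (hf : ContDiff ℝ 1 f) (hf' : HasPolynomialGrowth (fderiv ℝ f)) (c : ℝ) :
    ∫ x, Φ (c * (f x - ∫ y, f y ∂μ)) ∂μ ≤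
      max |c * π / 2| ((c * π / 2) ^ 2) * (∫ y, max ‖y‖ (‖y‖ ^ 2) ∂μ) *
        ∫ x, Φ ‖fderiv ℝ f x‖ ∂μ := by
  have hΦc : Continuous Φ := hΦ_convex.locallyLipschitz.continuous
  have convex_scaled : ConvexOn ℝ Set.univ fun t ↦ Φ (c * t) :=
    hΦ_convex.comp_linearMap (LinearMap.mulLeft ℝ c)
  have growth_scaled : HasPolynomialGrowth fun t ↦ Φ (c * t) :=
    hΦ.hasPolynomialGrowth.comp (.of_continuousLinearMap (ContinuousLinearMap.mul ℝ ℝ c))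
  have integrable_fderiv : Integrable (fun x ↦ Φ ‖fderiv ℝ f x‖) μ :=
    (hΦ.hasPolynomialGrowth.comp hf'.norm).integrable (by fun_prop)
  have integrable_max : Integrable (fun y ↦ max ‖y‖ (‖y‖ ^ 2)) μ :=
    ((IsGaussian.integrable_id (μ := μ)).norm).sup IsGaussian.memLp_two_id.integrable_norm_pow'
  calc ∫ x, Φ (c * (f x - ∫ y, f y ∂μ)) ∂μ
      ≤ ∫ q, Φ (c * (π / 2 * fderiv ℝ f q.1 q.2)) ∂(μ.prod μ) :=
        integral_comp_sub_integral_le_integral_fderiv hμ convex_scaled growth_scaled hf hf'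
    _ = ∫ q, Φ (c * π / 2 * fderiv ℝ f q.1 q.2) ∂(μ.prod μ) := by
        simp only [← mul_assoc, mul_div_assoc]
    _ ≤ _ := hΦ.integral_apply_mul_clm_prod_le _ integrable_fderiv integrable_max

theorem poincare_mixture_general (hμ : ∫ x, x ∂μ = 0) {Φ : ℝ → ℝ} (hΦ : HasDeltaTwoBound Φ)
    (hΦ_convex : ConvexOn ℝ Set.univ Φ) {f : E → ℝ} (hf : ContDiff ℝ 1 f)
    (hf' : HasPolynomialGrowth (fderiv ℝ f)) {lam : ℝ} (hlam : 0 < lam)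
    (hnorm : max |lam * π / 2| ((lam * π / 2) ^ 2) * ∫ y, max ‖y‖ (‖y‖ ^ 2) ∂μ ≤ 1) :
    (∫ x, Φ (lam * (f x - ∫ y, f y ∂μ)) ∂μ ≤ ∫ x, Φ ‖fderiv ℝ f x‖ ∂μ) ∧
      luxNorm Φ μ (fun x ↦ f x - ∫ y, f y ∂μ) ≤
        lam⁻¹ * luxNorm Φ μ (fun x ↦ ‖fderiv ℝ f x‖) := by
  have hΦc : Continuous Φ := hΦ_convex.locallyLipschitz.continuous
  have hfc : Continuous f := hf.continuous
  have f_growth : HasPolynomialGrowth f := .of_fderiv (hf.differentiable one_ne_zero) hf'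
  have modular_le (ρ : ℝ) : ∫ x, Φ (lam * (f x - ∫ y, f y ∂μ) / ρ) ∂μ ≤
      ∫ x, Φ (‖fderiv ℝ f x‖ / ρ) ∂μ := by
    have convex_rescaled : ConvexOn ℝ Set.univ fun t ↦ Φ (t / ρ) := by
      simp only [div_eq_inv_mul]
      exact hΦ_convex.comp_linearMap (LinearMap.mulLeft ℝ ρ⁻¹)
    exact ((hΦ.comp_div_const ρ).integral_mul_sub_integral_le hμ convex_rescaled hf hf' lam).trans
      (mul_le_of_le_one_left (integral_nonneg fun x ↦ hΦ.nonneg _) hnorm)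
  have integrable_centered (ρ : ℝ) :
      Integrable (fun x ↦ Φ (lam * (f x - ∫ y, f y ∂μ) / ρ)) μ :=
    ((hΦ.comp_div_const ρ).hasPolynomialGrowth.comp
      ((f_growth.sub (.const _)).const_mul lam)).integrable (by fun_prop)
  have integrable_fderiv (ρ : ℝ) : Integrable (fun x ↦ Φ (‖fderiv ℝ f x‖ / ρ)) μ :=
    ((hΦ.comp_div_const ρ).hasPolynomialGrowth.comp hf'.norm).integrable (by fun_prop)
  refine ⟨by simpa only [div_one] using modular_le 1, (le_inv_mul_iff₀ hlam).2 ?_⟩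
  rw [← luxNorm_const_mul hlam]
  exact luxNorm_le_luxNorm (fun ρ _ ↦ modular_le ρ) (fun ρ _ ↦ integrable_centered ρ)
    (hΦ.nonempty_setOf_modular_le_one fun ρ _ ↦ integrable_fderiv ρ)

end MaureyPisier

section ConjugateYoungFunction

lemma concaveOn_arsinh : ConcaveOn ℝ (Set.Ici 0) arsinh := by
  refine AntitoneOn.concaveOn_of_deriv (convex_Ici 0) continuous_arsinh.continuousOn
    differentiable_arsinh.differentiableOn fun x hx y _ hxy ↦ ?_
  rw [interior_Ici] at hx
  have x_nonneg : 0 ≤ x := (Set.mem_Ioi.1 hx).le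
  rw [(hasDerivAt_arsinh x).deriv, (hasDerivAt_arsinh y).deriv]
  gcongr

lemma arsinh_mul_le {a t : ℝ} (ha : 1 ≤ a) (ht : 0 ≤ t) : arsinh (a * t) ≤ a * arsinh t := by
  have a_pos : 0 < a := one_pos.trans_le ha
  have chord := concaveOn_arsinh.2 (Set.mem_Ici.2 (mul_nonneg a_pos.le ht)) Set.self_mem_Ici
    (inv_nonneg.2 a_pos.le) (sub_nonneg.2 (inv_le_one_of_one_le₀ ha)) (by ring)
  simp only [smul_eq_mul, arsinh_zero, mul_zero, add_zero,
    inv_mul_cancel_left₀ a_pos.ne'] at chord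
  exact (inv_mul_le_iff₀ a_pos).1 chord

lemma hasDerivAt_conjY (y : ℝ) : HasDerivAt conjY (arsinh y) y :=
  (continuous_arsinh.integral_hasStrictDerivAt 0 y).hasDerivAt

lemma conjY_zero : conjY 0 = 0 :=
  intervalIntegral.integral_same

lemma convexOn_conjY : ConvexOn ℝ Set.univ conjY := by
  refine Monotone.convexOn_univ_of_deriv (fun y ↦ (hasDerivAt_conjY y).differentiableAt) ?_
  rw [funext fun y ↦ (hasDerivAt_conjY y).deriv]
  exact arsinh_strictMono.monotone

lemma conjY_neg (y : ℝ) : conjY (-y) = conjY y := by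
  have reflect := intervalIntegral.integral_comp_neg (a := 0) (b := y) (f := arsinh)
  simp only [arsinh_neg, neg_zero, intervalIntegral.integral_neg] at reflect
  rw [conjY, intervalIntegral.integral_symm, ← reflect, neg_neg, conjY]

lemma conjY_abs (y : ℝ) : conjY |y| = conjY y := by
  rcases abs_choice y with h | h <;> simp only [h, conjY_neg]

lemma conjY_nonneg (y : ℝ) : 0 ≤ conjY y := by
  rw [← conjY_abs]
  exact intervalIntegral.integral_nonneg (abs_nonneg y) fun t ht ↦ arsinh_nonneg_iff.2 ht.1

lemma conjY_mul_le_of_le_one {a : ℝ} (ha₀ : 0 ≤ a) (ha₁ : a ≤ 1) (t : ℝ) :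
    conjY (a * t) ≤ a * conjY t := by
  simpa [conjY_zero] using
    convexOn_conjY.2 (Set.mem_univ t) (Set.mem_univ 0) ha₀ (sub_nonneg.2 ha₁) (by ring)

lemma conjY_mul_le_of_one_le {a t : ℝ} (ha : 1 ≤ a) (ht : 0 ≤ t) :
    conjY (a * t) ≤ a ^ 2 * conjY t :=
  calc conjY (a * t) = a * ∫ s in 0..t, arsinh (a * s) := by
        rw [intervalIntegral.mul_integral_comp_mul_left, mul_zero, conjY]
    _ ≤ a * ∫ s in 0..t, a * arsinh s := by
        gcongr
        refine intervalIntegral.integral_mono_on ht (Continuous.intervalIntegrable ?_ _ _)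
          (Continuous.intervalIntegrable ?_ _ _) fun s hs ↦ arsinh_mul_le ha hs.1
        · exact continuous_arsinh.comp (continuous_const_mul a)
        · exact continuous_arsinh.const_mul a
    _ = a ^ 2 * conjY t := by rw [intervalIntegral.integral_const_mul, conjY]; ring

lemma hasDeltaTwoBound_conjY : HasDeltaTwoBound conjY := by
  intro a t
  rw [← conjY_abs (a * t), abs_mul, ← conjY_abs t, ← sq_abs a]
  rcases le_total |a| 1 with ha | ha
  · exact (conjY_mul_le_of_le_one (abs_nonneg a) ha |t|).trans
      (mul_le_mul_of_nonneg_right (le_max_left _ _) (conjY_nonneg _))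
  · exact (conjY_mul_le_of_one_le ha (abs_nonneg t)).trans
      (mul_le_mul_of_nonneg_right (le_max_right _ _) (conjY_nonneg _))

end ConjugateYoungFunction

section GaussianMeasure

open ProbabilityTheory

lemma gaussM_nonneg (n : ℕ) (x : EuclideanSpace ℝ (Fin n)) : 0 ≤ gaussM n x := by
  unfold gaussM
  positivity

lemma continuous_gaussM (n : ℕ) : Continuous (gaussM n) := by
  unfold gaussM
  fun_prop

lemma gaussM_mul_cexp_inner (n : ℕ) (x t : EuclideanSpace ℝ (Fin n)) :
    gaussM n x * Complex.exp (inner ℝ x t * Complex.I) =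
      ((2 * π) ^ (-(n : ℝ) / 2) : ℝ) *
        Complex.exp (-(1 / 2) * ‖x‖ ^ 2 + Complex.I * inner ℝ t x) := by
  rw [gaussM, Complex.ofReal_mul, mul_assoc, Complex.ofReal_exp, ← Complex.exp_add,
    real_inner_comm]
  push_cast
  ring_nf

lemma integrable_gaussM (n : ℕ) : Integrable (gaussM n) := by
  have integrable_complex := (GaussianFourier.integrable_cexp_neg_mul_sq_norm_add (b := 1 / 2)
    (by norm_num) Complex.I (0 : EuclideanSpace ℝ (Fin n))).const_mul
      (((2 * π) ^ (-(n : ℝ) / 2) : ℝ) : ℂ)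
  simp only [← gaussM_mul_cexp_inner] at integrable_complex
  simpa using integrable_complex.re

instance (n : ℕ) : IsFiniteMeasure (gaussMeasure n) :=
  isFiniteMeasure_withDensity_ofReal (integrable_gaussM n).2

lemma two_pi_rpow_mul_cpow_eq_one (s : ℝ) :
    (((2 * π) ^ (-s) : ℝ) : ℂ) * (π / (1 / 2) : ℂ) ^ (s : ℂ) = 1 := by
  rw [show (π / (1 / 2) : ℂ) = ((2 * π : ℝ) : ℂ) by push_cast; ring,
    ← Complex.ofReal_cpow two_pi_pos.le, ← Complex.ofReal_mul, ← rpow_add two_pi_pos,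
    neg_add_cancel, rpow_zero, Complex.ofReal_one]

lemma charFun_gaussMeasure (n : ℕ) (t : EuclideanSpace ℝ (Fin n)) :
    charFun (gaussMeasure n) t = Complex.exp (-‖t‖ ^ 2 / 2) := by
  have normalization := two_pi_rpow_mul_cpow_eq_one (n / 2)
  push_cast [← neg_div] at normalization
  rw [charFun_apply, gaussMeasure, integral_withDensity_eq_integral_toReal_smul
    (continuous_gaussM n).measurable.ennreal_ofReal (by simp)]
  simp only [ENNReal.toReal_ofReal (gaussM_nonneg n _), Complex.real_smul, gaussM_mul_cexp_inner]
  rw [integral_const_mul, GaussianFourier.integral_cexp_neg_mul_sq_norm_add (by norm_num),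
    finrank_euclideanSpace_fin, ← mul_assoc, normalization, one_mul, Complex.I_sq]
  ring_nf

lemma gaussMeasure_eq_stdGaussian (n : ℕ) :
    gaussMeasure n = stdGaussian (EuclideanSpace ℝ (Fin n)) :=
  Measure.ext_of_charFun (funext fun t ↦ by rw [charFun_gaussMeasure, charFun_stdGaussian])

instance (n : ℕ) : IsGaussian (gaussMeasure n) := by
  rw [gaussMeasure_eq_stdGaussian]
  infer_instance

lemma integral_id_gaussMeasure (n : ℕ) : ∫ x, x ∂(gaussMeasure n) = 0 := by
  rw [gaussMeasure_eq_stdGaussian]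
  exact integral_id_stdGaussian

end GaussianMeasure

/-- Poincaré-type inequality in the mixture space. If `f ∈ C¹` has
polynomial growth and `λ > 0` satisfies `C(λπ/2)·∫C(|y|)dM = 1` with
`C(a) = max(|a|,a²)`, then
`∫(cosh−1)_*(λ(f − ∫fdM))dM ≤ ∫(cosh−1)_*(|∇f|)dM`, equivalently
`‖f − ∫fdM‖_{(cosh−1)_*,M} ≤ λ⁻¹‖|∇f|‖_{(cosh−1)_*,M}`. -/
theorem poincare_mixture {n : ℕ} (f : EuclideanSpace ℝ (Fin n) → ℝ)
    (hf : ContDiff ℝ 1 f)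
    (hgrowth : ∃ C k, ∀ x, |f x| + ‖fderiv ℝ f x‖ ≤ C * (1 + ‖x‖) ^ k)
    (lam : ℝ) (hlam : 0 < lam)
    (hnorm : max |lam * π / 2| ((lam * π / 2) ^ 2) *
        ∫ y, max ‖y‖ (‖y‖ ^ 2) ∂(gaussMeasure n) = 1) :
    (∫ x, conjY (lam * (f x - ∫ y, f y ∂(gaussMeasure n))) ∂(gaussMeasure n) ≤
        ∫ x, conjY ‖fderiv ℝ f x‖ ∂(gaussMeasure n)) ∧
      luxNorm conjY (gaussMeasure n)
          (fun x => f x - ∫ y, f y ∂(gaussMeasure n)) ≤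
        lam⁻¹ * luxNorm conjY (gaussMeasure n) (fun x => ‖fderiv ℝ f x‖) := by
  obtain ⟨C, k, hC⟩ := hgrowth
  have fderiv_growth : HasPolynomialGrowth (fderiv ℝ f) :=
    ⟨C, k, fun x ↦ (le_add_of_nonneg_left (abs_nonneg (f x))).trans (hC x)⟩
  exact poincare_mixture_general (integral_id_gaussMeasure n) hasDeltaTwoBound_conjY
    convexOn_conjY hf fderiv_growth hlam hnorm.le
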